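/- For any two integers p, q with q ≥ 2p, there exists a graph G such that τ_3(G) = p and τ_3(L(G)) = q; in particular G = K_{p+2, q−p+2} works, since τ_3(K_{p+2,q−p+2}) = p and τ_3(L(K_{p+2,q−p+2})) = τ_3(K_{p+2} □ K_{q−p+2}) = q. -/

import Mathlib

open SimpleGraph

/-- A pendant `S`-Steiner tree in `G`: a subgraph `T` of `G` that is a tree,
contains `S`, and in which every vertex of `S` has degree 1. -/
def IsPendantSTree {V : Type*} (G : SimpleGraph V) (S : Set V) (T : G.Subgraph) : Prop :=
  S ⊆ T.verts ∧ T.coe.IsTree ∧ ∀ v ∈ S, (T.neighborSet v).ncard = 1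

/-- A family of pairwise internally disjoint pendant `S`-Steiner trees. -/
def IsIntDisjointFamily {V : Type*} (G : SimpleGraph V) (S : Set V)
    (F : Finset G.Subgraph) : Prop :=
  (∀ T ∈ F, IsPendantSTree G S T) ∧
  ∀ T ∈ F, ∀ T' ∈ F, T ≠ T' →
    T.edgeSet ∩ T'.edgeSet = ∅ ∧ T.verts ∩ T'.verts = S

/-- A family of pairwise edge-disjoint pendant `S`-Steiner trees. -/
def IsEdgeDisjointFamily {V : Type*} (G : SimpleGraph V) (S : Set V)
    (F : Finset G.Subgraph) : Prop :=
  (∀ T ∈ F, IsPendantSTree G S T) ∧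
  ∀ T ∈ F, ∀ T' ∈ F, T ≠ T' → T.edgeSet ∩ T'.edgeSet = ∅

/-- `τ(S)`: the maximum number of pairwise internally disjoint pendant `S`-Steiner trees. -/
noncomputable def tauLocal {V : Type*} (G : SimpleGraph V) (S : Set V) : ℕ :=
  sSup {n | ∃ F : Finset G.Subgraph, F.card = n ∧ IsIntDisjointFamily G S F}

/-- Pendant-tree `k`-connectivity `τ_k(G)`. -/
noncomputable def tau {V : Type*} (G : SimpleGraph V) (k : ℕ) : ℕ :=
  sInf {n | ∃ S : Finset V, S.card = k ∧ tauLocal G ↑S = n}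

/-- `μ(S)`: the maximum number of pairwise edge-disjoint pendant `S`-Steiner trees. -/
noncomputable def muLocal {V : Type*} (G : SimpleGraph V) (S : Set V) : ℕ :=
  sSup {n | ∃ F : Finset G.Subgraph, F.card = n ∧ IsEdgeDisjointFamily G S F}

/-- Pendant-tree `k`-edge-connectivity `μ_k(G)`. -/
noncomputable def mu {V : Type*} (G : SimpleGraph V) (k : ℕ) : ℕ :=
  sInf {n | ∃ S : Finset V, S.card = k ∧ muLocal G ↑S = n}

/-- Vertex connectivity (cut version): the least size of a vertex set whose removal
disconnects the graph or leaves at most one vertex. -/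
noncomputable def kappa {V : Type*} [Fintype V] (G : SimpleGraph V) : ℕ :=
  sInf {n | ∃ S : Finset V, S.card = n ∧
    (¬ ((⊤ : G.Subgraph).deleteVerts ↑S).coe.Connected ∨ Fintype.card V - S.card ≤ 1)}

/-- Edge connectivity: the least size of an edge set whose removal disconnects the graph. -/
noncomputable def edgeConn {V : Type*} (G : SimpleGraph V) : ℕ :=
  sInf {n | ∃ F : Finset (Sym2 V), F.card = n ∧ ↑F ⊆ G.edgeSet ∧
    ¬ (G.deleteEdges ↑F).Connected}

/-- Edges of `G` with one endpoint in `S` and the other outside `S`. -/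
def crossEdges {V : Type*} (G : SimpleGraph V) (S : Set V) : Set (Sym2 V) :=
  {e | e ∈ G.edgeSet ∧ ∃ u v, e = s(u, v) ∧ u ∈ S ∧ v ∉ S}

/-!
Let `|S| ≥ 3`. A pendant `S`-Steiner tree amounts to a *core*, a connected vertex set disjoint from
`S` and adjacent to every vertex of `S`, with the vertices of `S` hung onto it as leaves; internally
disjoint trees correspond to disjoint cores. Each tree leaves a given `v ∈ S` through its own
neighbour of `v` outside `S`, so letting `S` consist of `v` and `k - 1` of its neighbours gives
`τ_k ≤ deg v + 1 - k`. This is an equality for both graphs, with `v` of minimum degree.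

* In `K_{a,b}`, if `S` meets both sides, disjoint edges that avoid `S` are cores; if `S` lies in one
  side, every single vertex of the other side is a core.
* In `K_a □ K_b ≅ L(K_{a,b})`, the cells outside `S` of a row, in the columns met by `S`, form a
  core if the row avoids `S`, or if it meets `S` only in a cell adjacent to no other cell of `S`;
  similarly for columns. If `|S| = 3` and `S` has such an isolated cell, the other two cells meet
  at most four rows and columns; if it has none, then all of `S` meets at most four. Hence at least
  `a + b - 4` disjoint cores remain.
-/

variable {V W : Type*} {G : SimpleGraph V} {H : SimpleGraph W} {S : Set V} {k : ℕ}

section UpperBound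

variable {T : G.Subgraph} {u v w : V}

theorem IsPendantSTree.eq_of_adj (hT : IsPendantSTree G S T) (hv : v ∈ S)
    (hu : T.Adj v u) (hw : T.Adj v w) : u = w := by
  obtain ⟨x, hx⟩ := Set.ncard_eq_one.mp (hT.2.2 v hv)
  have eq_x {y : V} (hy : T.Adj v y) : y = x := Set.mem_singleton_iff.mp (hx ▸ hy)
  rw [eq_x hu, eq_x hw]

/- Two adjacent leaves would form a connected component, leaving no room for a third vertex. -/
theorem IsPendantSTree.not_adj (hT : IsPendantSTree G S T) (hS : 2 < S.ncard)
    (hu : u ∈ S) (hv : v ∈ S) : ¬T.Adj u v := by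
  intro huv
  obtain ⟨w, hwS, hw⟩ : ∃ w ∈ S, w ∉ ({u, v} : Set V) :=
    Set.exists_mem_notMem_of_ncard_lt_ncard <| (Set.ncard_insert_le u {v}).trans_lt <| by
      rwa [Set.ncard_singleton]
  obtain ⟨walk⟩ := hT.2.1.connected.preconnected ⟨u, hT.1 hu⟩ ⟨w, hT.1 hwS⟩
  obtain ⟨d, -, hd, hd'⟩ :=
    walk.exists_boundary_dart {x | x.1 ∈ ({u, v} : Set V)} (Or.inl rfl) hw
  have hadj : T.Adj d.fst d.snd := d.adj
  rcases hd with h | h <;> rw [h] at hadj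
  · exact hd' (Or.inr (hT.eq_of_adj hu hadj huv))
  · exact hd' (Or.inl (hT.eq_of_adj hv hadj huv.symm))

theorem IsPendantSTree.exists_adj_notMem (hT : IsPendantSTree G S T) (hS : 2 < S.ncard)
    (hv : v ∈ S) : ∃ w ∉ S, T.Adj v w := by
  obtain ⟨w, hw⟩ : (T.neighborSet v).Nonempty :=
    Set.nonempty_of_ncard_ne_zero (hT.2.2 v hv ▸ one_ne_zero)
  exact ⟨w, fun hwS ↦ hT.not_adj hS hv hwS hw, hw⟩

theorem tauLocal_le_ncard_neighborSet_diff (hS : 2 < S.ncard) (hv : v ∈ S)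
    (hfin : (G.neighborSet v).Finite) : tauLocal G S ≤ (G.neighborSet v \ S).ncard := by
  have : Nonempty V := ⟨v⟩
  refine csSup_le' ?_
  rintro n ⟨F, rfl, hF, hdisj⟩
  choose! f hfS hf using fun T hT ↦ (hF T hT).exists_adj_notMem hS hv
  rw [← Set.ncard_coe_finset]
  refine Set.ncard_le_ncard_of_injOn f (fun T hT ↦ ⟨(hf T hT).adj_sub, hfS T hT⟩) ?_ hfin.sdiff
  intro T hT T' hT' heq
  by_contra hne
  have hmem : f T ∈ T.verts ∩ T'.verts := ⟨(hf T hT).snd_mem, heq ▸ (hf T' hT').snd_mem⟩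
  exact hfS T hT ((hdisj T hT T' hT' hne).2 ▸ hmem)

/- The bound `τ(S) ≤ deg v + 1 - k` holds when `S` consists of `v` and `k - 1` of its neighbours,
since every pendant tree then leaves `v` through one of the other neighbours. -/
theorem exists_tauLocal_add_le_degree (v : V) [Fintype (G.neighborSet v)] (hk : 2 < k)
    (hkv : k ≤ G.degree v + 1) :
    ∃ S : Finset V, S.card = k ∧ tauLocal G S + k ≤ G.degree v + 1 := by
  classical
  obtain ⟨N, hN, hNcard⟩ : ∃ N ⊆ G.neighborFinset v, N.card = k - 1 :=
    Finset.exists_subset_card_eq (by rw [card_neighborFinset_eq_degree]; omega)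
  have hvN : v ∉ N := fun h ↦ G.loopless.irrefl v ((G.mem_neighborFinset v v).mp (hN h))
  have hScard : (insert v N).card = k := by rw [Finset.card_insert_of_notMem hvN]; omega
  refine ⟨insert v N, hScard, ?_⟩
  have hle := calc
    tauLocal G ↑(insert v N) ≤ (G.neighborSet v \ ↑(insert v N)).ncard :=
      tauLocal_le_ncard_neighborSet_diff (by rwa [Set.ncard_coe_finset, hScard])
        (Finset.mem_insert_self v N) (Set.toFinite _)
    _ ≤ (G.neighborFinset v \ N).card := by
      rw [← Set.ncard_coe_finset, Finset.coe_sdiff, coe_neighborFinset]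
      gcongr
      · exact (Set.toFinite _).sdiff
      · exact Finset.subset_insert v N
    _ = G.degree v - (k - 1) := by
      rw [Finset.card_sdiff_of_subset hN, card_neighborFinset_eq_degree, hNcard]
  omega

theorem tau_add_eq_degree_add_one (v : V) [Fintype (G.neighborSet v)] (hk : 2 < k)
    (hkv : k ≤ G.degree v + 1)
    (hle : ∀ S : Finset V, S.card = k → G.degree v + 1 ≤ tauLocal G S + k) :
    tau G k + k = G.degree v + 1 := by
  obtain ⟨S, hS, hSle⟩ := exists_tauLocal_add_le_degree v hk hkv
  obtain ⟨S', hS', htau⟩ : ∃ S : Finset V, S.card = k ∧ tauLocal G S = tau G k :=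
    Nat.sInf_mem (s := {n | ∃ S : Finset V, S.card = k ∧ tauLocal G S = n}) ⟨_, S, hS, rfl⟩
  have hge := hle S' hS'
  have hupper : tau G k ≤ tauLocal G S := Nat.sInf_le ⟨S, hS, rfl⟩
  omega

end UpperBound

section Iso

theorem IsPendantSTree.map (e : G ≃g H) {T : G.Subgraph} (hT : IsPendantSTree G S T) :
    IsPendantSTree H (e '' S) (T.map e.toHom) := by
  let coeIso : T.coe ≃g (T.map e.toHom).coe :=
    { e.toEquiv.image T.verts with
      map_rel_iff' := by
        rintro ⟨a, ha⟩ ⟨b, hb⟩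
        change Relation.Map T.Adj e e (e a) (e b) ↔ T.Adj a b
        exact Relation.map_apply_apply e.injective e.injective T.Adj a b }
  refine ⟨Set.image_mono hT.1, coeIso.isTree_iff.mp hT.2.1, ?_⟩
  rintro _ ⟨v, hv, rfl⟩
  have hnbr : (T.map e.toHom).neighborSet (e v) = e '' T.neighborSet v := by
    ext w
    simp [Relation.Map]
  rw [hnbr, Set.ncard_image_of_injective _ e.injective, hT.2.2 v hv]

theorem IsIntDisjointFamily.map (e : G ≃g H) {F : Finset G.Subgraph}
    (hF : IsIntDisjointFamily G S F) :
    ∃ F' : Finset H.Subgraph, F'.card = F.card ∧ IsIntDisjointFamily H (e '' S) F' := by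
  have hinj : Function.Injective (Subgraph.map e.toHom) :=
    Function.LeftInverse.injective (g := Subgraph.map e.symm.toHom) fun T ↦ by
      rw [← Subgraph.map_comp]
      convert T.map_id
      ext v
      exact e.symm_apply_apply v
  refine ⟨F.map ⟨_, hinj⟩, F.card_map _, ?_, ?_⟩
  · simp only [Finset.forall_mem_map]
    exact fun T hT ↦ (hF.1 T hT).map e
  · simp only [Finset.forall_mem_map, Function.Embedding.coeFn_mk]
    intro T hT T' hT' hne
    obtain ⟨hedge, hverts⟩ := hF.2 T hT T' hT' (ne_of_apply_ne _ hne)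
    constructor
    · have hsym2 : Function.Injective (Sym2.map e.toHom) := Sym2.map.injective e.injective
      rw [Subgraph.edgeSet_map, Subgraph.edgeSet_map, ← Set.image_inter hsym2, hedge,
        Set.image_empty]
    · exact (Set.image_inter e.injective).symm.trans (congrArg _ hverts)

theorem tauLocal_image (e : G ≃g H) (S : Set V) : tauLocal H (e '' S) = tauLocal G S := by
  refine congrArg sSup (Set.Subset.antisymm ?_ ?_)
  · rintro n ⟨F, rfl, hF⟩
    have himage : e.symm '' (e '' S) = S := e.toEquiv.symm_image_image S
    exact himage ▸ hF.map e.symm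
  · rintro n ⟨F, rfl, hF⟩
    exact hF.map e

theorem tau_congr (e : G ≃g H) (k : ℕ) : tau G k = tau H k := by
  refine congrArg sInf (Set.ext fun n ↦ e.toEquiv.finsetCongr.exists_congr fun S ↦ ?_)
  have himage : ((e.toEquiv.finsetCongr S : Finset W) : Set W) = e '' S := Finset.coe_map _ _
  rw [himage, tauLocal_image, Equiv.finsetCongr_apply, Finset.card_map]

end Iso

section SteinerCore

/-- `K` is the vertex set of what remains of some pendant `S`-Steiner tree once its leaves `S` are
removed: a connected set disjoint from `S` and adjacent to every vertex of `S`. Only the vertex set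
is recorded, as the tree inside it can be chosen freely. -/
structure IsSteinerCore (G : SimpleGraph V) (S K : Set V) : Prop where
  connected : (G.induce K).Connected
  disjoint : Disjoint S K
  exists_adj : ∀ v ∈ S, ∃ w ∈ K, G.Adj v w

variable {K : Set V}

theorem IsSteinerCore.of_isClique (hK : G.IsClique K) (hne : K.Nonempty) (hdisj : Disjoint S K)
    (hadj : ∀ v ∈ S, ∃ w ∈ K, G.Adj v w) : IsSteinerCore G S K where
  connected := by
    have := hne.to_subtype
    rw [induce_eq_top.mpr hK]
    exact connected_top
  disjoint := hdisj
  exists_adj := hadj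

theorem exists_isTree_verts_eq {L : G.Subgraph} (hL : L.coe.Connected) :
    ∃ T ≤ L, T.verts = L.verts ∧ T.coe.IsTree := by
  obtain ⟨t, htL, ht⟩ := hL.exists_isTree_le
  let T : G.Subgraph :=
    { verts := L.verts
      Adj u v := ∃ (hu : u ∈ L.verts) (hv : v ∈ L.verts), t.Adj ⟨u, hu⟩ ⟨v, hv⟩
      adj_sub := fun ⟨_, _, huv⟩ ↦ L.adj_sub (htL huv)
      edge_vert := fun ⟨hu, _, _⟩ ↦ hu
      symm := ⟨fun _ _ ⟨hu, hv, huv⟩ ↦ ⟨hv, hu, huv.symm⟩⟩ }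
  have hTt : T.coe = t := by
    ext u v
    exact ⟨fun ⟨_, _, huv⟩ ↦ huv, fun huv ↦ ⟨u.2, v.2, huv⟩⟩
  exact ⟨T, ⟨subset_rfl, fun _ _ ⟨_, _, huv⟩ ↦ htL huv⟩, rfl, hTt ▸ ht⟩

theorem exists_isPendantSTree_verts_eq {L : G.Subgraph} (hL : L.coe.Connected)
    (hSL : S ⊆ L.verts)
    (hleaf : ∀ v ∈ S, (L.neighborSet v).ncard = 1) :
    ∃ T : G.Subgraph, T.verts = L.verts ∧ IsPendantSTree G S T := by
  obtain ⟨T, hTL, hverts, hT⟩ := exists_isTree_verts_eq hL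
  refine ⟨T, hverts, hverts ▸ hSL, hT, fun v hv ↦ ?_⟩
  obtain ⟨x, hx⟩ := Set.ncard_eq_one.mp (hleaf v hv)
  have hvx : L.Adj v x := hx.ge rfl
  have : Nontrivial T.verts :=
    Set.Nontrivial.coe_sort ⟨v, hverts ▸ hvx.fst_mem, x, hverts ▸ hvx.snd_mem, hvx.ne⟩
  obtain ⟨w, hw⟩ :=
    hT.connected.preconnected.exists_adj_of_nontrivial ⟨v, hverts ▸ hSL hv⟩
  have hsub : T.neighborSet v ⊆ L.neighborSet v := Subgraph.neighborSet_subset_of_subgraph hTL v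
  rw [hx] at hsub
  rw [(Set.subset_singleton_iff_eq.mp hsub).resolve_left (Set.nonempty_iff_ne_empty.mp ⟨w, hw⟩),
    Set.ncard_singleton]

/-- The edges of `G` inside `K`, together with one edge `v f(v)` for each leaf `v ∈ S`. -/
def attachLeaves (G : SimpleGraph V) (S K : Set V) (f : V → V) : G.Subgraph where
  verts := S ∪ K
  Adj u v := G.Adj u v ∧ (u ∈ K ∧ v ∈ K ∨ (u ∈ S ∧ v ∈ K) ∧ f u = v ∨ (v ∈ S ∧ u ∈ K) ∧ f v = u)
  adj_sub := And.left
  edge_vert := by grind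
  symm := ⟨by grind [SimpleGraph.adj_comm]⟩

theorem connected_coe_attachLeaves {f : V → V} (hK : (G.induce K).Connected)
    (hfK : ∀ v ∈ S, f v ∈ K) (hf : ∀ v ∈ S, G.Adj v (f v)) :
    (attachLeaves G S K f).coe.Connected := by
  obtain ⟨c, hc⟩ := hK.nonempty
  let inclusion : G.induce K →g (attachLeaves G S K f).coe :=
    ⟨fun v ↦ ⟨v, Or.inr v.2⟩, fun {u v} huv ↦ ⟨huv, Or.inl ⟨u.2, v.2⟩⟩⟩
  have reachable_core (v : V) (hv : v ∈ K) :
      (attachLeaves G S K f).coe.Reachable ⟨v, Or.inr hv⟩ ⟨c, Or.inr hc⟩ :=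
    (hK.preconnected ⟨v, hv⟩ ⟨c, hc⟩).map inclusion
  refine connected_iff_exists_forall_reachable _ |>.mpr ⟨⟨c, Or.inr hc⟩, ?_⟩
  rintro ⟨v, hv | hv⟩
  · have hadj : (attachLeaves G S K f).coe.Adj ⟨v, Or.inl hv⟩ ⟨f v, Or.inr (hfK v hv)⟩ :=
      ⟨hf v hv, Or.inr (Or.inl ⟨⟨hv, hfK v hv⟩, rfl⟩)⟩
    exact (hadj.reachable.trans (reachable_core _ (hfK v hv))).symm
  · exact (reachable_core v hv).symm

theorem neighborSet_attachLeaves {f : V → V} {v : V} (hdisj : Disjoint S K) (hv : v ∈ S)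
    (hfK : f v ∈ K) (hf : G.Adj v (f v)) : (attachLeaves G S K f).neighborSet v = {f v} := by
  have hvK : v ∉ K := Set.disjoint_left.mp hdisj hv
  ext w
  simp only [Subgraph.mem_neighborSet, attachLeaves, Set.mem_singleton_iff]
  grind

theorem IsSteinerCore.exists_isPendantSTree (hK : IsSteinerCore G S K) :
    ∃ T : G.Subgraph, T.verts = S ∪ K ∧ IsPendantSTree G S T := by
  have : Nonempty V := hK.connected.nonempty.map Subtype.val
  choose! f hfK hf using hK.exists_adj
  let L := attachLeaves G S K f
  have hleaf (v : V) (hv : v ∈ S) : (L.neighborSet v).ncard = 1 := by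
    rw [neighborSet_attachLeaves hK.disjoint hv (hfK v hv) (hf v hv), Set.ncard_singleton]
  exact exists_isPendantSTree_verts_eq (connected_coe_attachLeaves hK.connected hfK hf)
    Set.subset_union_left hleaf

theorem IsIntDisjointFamily.of_verts_inter {F : Finset G.Subgraph} (hS : 2 < S.ncard)
    (hF : ∀ T ∈ F, IsPendantSTree G S T)
    (hinter : ∀ T ∈ F, ∀ T' ∈ F, T ≠ T' → T.verts ∩ T'.verts = S) :
    IsIntDisjointFamily G S F := by
  refine ⟨hF, fun T hT T' hT' hne ↦ ⟨Set.eq_empty_of_forall_notMem ?_, hinter T hT T' hT' hne⟩⟩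
  rintro ⟨u, v⟩ ⟨huv : T.Adj u v, huv' : T'.Adj u v⟩
  have hS' := hinter T hT T' hT' hne
  exact (hF T hT).not_adj hS (hS' ▸ ⟨huv.fst_mem, huv'.fst_mem⟩)
    (hS' ▸ ⟨huv.snd_mem, huv'.snd_mem⟩) huv

theorem IsIntDisjointFamily.card_le_tauLocal [Finite V] {F : Finset G.Subgraph}
    (hF : IsIntDisjointFamily G S F) : F.card ≤ tauLocal G S := by
  have := Fintype.ofFinite G.Subgraph
  refine le_csSup ⟨Fintype.card G.Subgraph, ?_⟩ ⟨F, rfl, hF⟩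
  rintro n ⟨F', rfl, -⟩
  exact F'.card_le_univ

theorem card_le_tauLocal_of_isSteinerCore [Finite V] {ι : Type*} [Finite ι] {K : ι → Set V}
    (hS : 2 < S.ncard) (hK : ∀ i, IsSteinerCore G S (K i))
    (hdisj : Pairwise (Function.onFun Disjoint K)) : Nat.card ι ≤ tauLocal G S := by
  have := Fintype.ofFinite ι
  choose T hverts hT using fun i ↦ (hK i).exists_isPendantSTree
  have verts_inter {i j : ι} (hij : i ≠ j) : (T i).verts ∩ (T j).verts = S := by
    rw [hverts, hverts, ← Set.union_inter_distrib_left,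
      Set.disjoint_iff_inter_eq_empty.mp (hdisj hij), Set.union_empty]
  have hinj : Function.Injective T := by
    intro i j hij
    by_contra hne
    obtain ⟨c, hc⟩ := (hK i).connected.nonempty
    have hcS : c ∈ S := by
      rw [← verts_inter hne, ← hij, Set.inter_self, hverts]
      exact Or.inr hc
    exact Set.disjoint_left.mp (hK i).disjoint hcS hc
  have hF : IsIntDisjointFamily G S (Finset.univ.map ⟨T, hinj⟩) := by
    refine .of_verts_inter hS ?_ ?_ <;>
      simp only [Finset.forall_mem_map, Function.Embedding.coeFn_mk]
    · exact fun i _ ↦ hT i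
    · exact fun i _ j _ hne ↦ verts_inter (ne_of_apply_ne T hne)
  rw [Nat.card_eq_fintype_card, ← Finset.card_univ, ← Finset.card_map ⟨T, hinj⟩]
  exact hF.card_le_tauLocal

theorem ncard_le_tauLocal_of_forall_adj [Finite V] {C : Set V} (hS : 2 < S.ncard)
    (hC : ∀ c ∈ C, ∀ v ∈ S, G.Adj v c) : C.ncard ≤ tauLocal G S := by
  rw [← Nat.card_coe_set_eq]
  refine card_le_tauLocal_of_isSteinerCore (K := fun c : C ↦ {c.1}) hS (fun c ↦ ?_) fun c d hcd ↦ ?_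
  · refine .of_isClique (isClique_singleton c.1) (Set.singleton_nonempty c.1) ?_ fun v hv ↦
      ⟨c, rfl, hC c c.2 v hv⟩
    exact Set.disjoint_singleton_right.mpr fun hc ↦ G.loopless.irrefl c.1 (hC c c.2 c hc)
  · exact Set.disjoint_singleton.mpr (Subtype.coe_ne_coe.mpr hcd)

end SteinerCore

section CompleteBipartite

variable {α β : Type*} {S : Finset (α ⊕ β)}

theorem degree_completeBipartiteGraph_inl [Fintype β] (a : α)
    [Fintype ((completeBipartiteGraph α β).neighborSet (Sum.inl a))] :
    (completeBipartiteGraph α β).degree (Sum.inl a) = Fintype.card β := by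
  have hnbr : (completeBipartiteGraph α β).neighborSet (Sum.inl a) = Set.range Sum.inr := by
    ext (_ | _) <;> simp
  rw [← card_neighborSet_eq_degree, ← Nat.card_eq_fintype_card, hnbr,
    Nat.card_range_of_injective Sum.inr_injective, Nat.card_eq_fintype_card]

theorem degree_completeBipartiteGraph_inr [Fintype α] (b : β)
    [Fintype ((completeBipartiteGraph α β).neighborSet (Sum.inr b))] :
    (completeBipartiteGraph α β).degree (Sum.inr b) = Fintype.card α := by
  have hnbr : (completeBipartiteGraph α β).neighborSet (Sum.inr b) = Set.range Sum.inl := by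
    ext (_ | _) <;> simp
  rw [← card_neighborSet_eq_degree, ← Nat.card_eq_fintype_card, hnbr,
    Nat.card_range_of_injective Sum.inl_injective, Nat.card_eq_fintype_card]

theorem card_le_tauLocal_completeBipartiteGraph_of_toRight_eq_empty [Finite α] [Fintype β]
    (hS : 2 < S.card) (hright : S.toRight = ∅) :
    Fintype.card β ≤ tauLocal (completeBipartiteGraph α β) ↑S := by
  rw [← Nat.card_eq_fintype_card, ← Nat.card_range_of_injective (Sum.inr_injective (α := α)),
    Nat.card_coe_set_eq]
  refine ncard_le_tauLocal_of_forall_adj (by rwa [Set.ncard_coe_finset]) ?_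
  rintro _ ⟨b, rfl⟩ (a | b') hv
  · simp
  · exact absurd (Finset.mem_toRight.mpr hv) (hright ▸ Finset.notMem_empty b')

theorem card_le_tauLocal_completeBipartiteGraph_of_toLeft_eq_empty [Fintype α] [Finite β]
    (hS : 2 < S.card) (hleft : S.toLeft = ∅) :
    Fintype.card α ≤ tauLocal (completeBipartiteGraph α β) ↑S := by
  rw [← Nat.card_eq_fintype_card, ← Nat.card_range_of_injective (Sum.inl_injective (β := β)),
    Nat.card_coe_set_eq]
  refine ncard_le_tauLocal_of_forall_adj (by rwa [Set.ncard_coe_finset]) ?_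
  rintro _ ⟨a, rfl⟩ (a' | b) hv
  · exact absurd (Finset.mem_toLeft.mpr hv) (hleft ▸ Finset.notMem_empty a')
  · simp

theorem isSteinerCore_completeBipartiteGraph_pair {a : α} {b : β} {S : Set (α ⊕ β)}
    (ha : Sum.inl a ∉ S) (hb : Sum.inr b ∉ S) :
    IsSteinerCore (completeBipartiteGraph α β) S {Sum.inl a, Sum.inr b} where
  connected := induce_pair_connected_of_adj (by simp)
  disjoint := by simp [Set.disjoint_insert_right, ha, hb]
  exists_adj := by simp

theorem le_tauLocal_completeBipartiteGraph_of_le_compl [Fintype α] [Fintype β]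
    [DecidableEq α] [DecidableEq β] {n : ℕ} (hS : 2 < S.card) (hleft : n ≤ S.toLeftᶜ.card)
    (hright : n ≤ S.toRightᶜ.card) :
    n ≤ tauLocal (completeBipartiteGraph α β) ↑S := by
  obtain ⟨x⟩ : Nonempty (Fin n ↪ (S.toLeftᶜ : Finset α)) :=
    Function.Embedding.nonempty_of_card_le (by simpa only [Fintype.card_fin, Fintype.card_coe])
  obtain ⟨y⟩ : Nonempty (Fin n ↪ (S.toRightᶜ : Finset β)) :=
    Function.Embedding.nonempty_of_card_le (by simpa only [Fintype.card_fin, Fintype.card_coe])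
  rw [← Nat.card_fin n]
  refine card_le_tauLocal_of_isSteinerCore (K := fun i ↦ {Sum.inl (x i).1, Sum.inr (y i).1})
    (by rwa [Set.ncard_coe_finset]) (fun i ↦ isSteinerCore_completeBipartiteGraph_pair ?_ ?_)
    fun i j hij ↦ ?_
  · exact mt Finset.mem_toLeft.mpr (Finset.mem_compl.mp (x i).2)
  · exact mt Finset.mem_toRight.mpr (Finset.mem_compl.mp (y i).2)
  · have hx : (x j).1 ≠ x i := by simpa [Subtype.ext_iff] using hij.symm
    have hy : (y j).1 ≠ y i := by simpa [Subtype.ext_iff] using hij.symm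
    simp [Function.onFun, hx, hy]

theorem min_card_add_one_le_tauLocal_completeBipartiteGraph_add [Fintype α] [Fintype β]
    (hS : 2 < S.card) :
    min (Fintype.card α) (Fintype.card β) + 1 ≤
      tauLocal (completeBipartiteGraph α β) ↑S + S.card := by
  classical
  rcases S.toRight.eq_empty_or_nonempty with hright | hright
  · have := card_le_tauLocal_completeBipartiteGraph_of_toRight_eq_empty hS hright
    omega
  rcases S.toLeft.eq_empty_or_nonempty with hleft | hleft
  · have := card_le_tauLocal_completeBipartiteGraph_of_toLeft_eq_empty hS hleft
    omega
  have hsum : S.toLeft.card + S.toRight.card = S.card := S.card_toLeft_add_card_toRight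
  have hleft_compl := S.toLeft.card_compl
  have hright_compl := S.toRight.card_compl
  have := hleft.card_pos
  have := hright.card_pos
  have := le_tauLocal_completeBipartiteGraph_of_le_compl
    (n := min (Fintype.card α) (Fintype.card β) + 1 - S.card) hS (by omega) (by omega)
  omega

theorem tau_completeBipartiteGraph_add [Fintype α] [Fintype β] (hk : 2 < k)
    (hkmin : k ≤ min (Fintype.card α) (Fintype.card β) + 1) :
    tau (completeBipartiteGraph α β) k + k = min (Fintype.card α) (Fintype.card β) + 1 := by
  classical
  have hlower (S : Finset (α ⊕ β)) (hS : S.card = k) :=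
    hS ▸ min_card_add_one_le_tauLocal_completeBipartiteGraph_add (hS ▸ hk)
  obtain ⟨v, hv⟩ : ∃ v, (completeBipartiteGraph α β).degree v =
      min (Fintype.card α) (Fintype.card β) := by
    rcases le_total (Fintype.card α) (Fintype.card β) with hle | hle
    · obtain ⟨b⟩ : Nonempty β := Fintype.card_pos_iff.mp (by omega)
      exact ⟨Sum.inr b, by rw [degree_completeBipartiteGraph_inr, min_eq_left hle]⟩
    · obtain ⟨a⟩ : Nonempty α := Fintype.card_pos_iff.mp (by omega)
      exact ⟨Sum.inl a, by rw [degree_completeBipartiteGraph_inl, min_eq_right hle]⟩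
  rw [← hv] at hkmin hlower ⊢
  exact tau_add_eq_degree_add_one v hk hkmin hlower

end CompleteBipartite

section RookGraph

variable {α β : Type*}

/-- The rook graph `K_α □ K_β`, in which two cells are adjacent when they differ and share a row
(the first coordinate) or a column (the second). -/
abbrev rookGraph (α β : Type*) : SimpleGraph (α × β) :=
  (⊤ : SimpleGraph α) □ (⊤ : SimpleGraph β)

theorem rookGraph_adj {s t : α × β} :
    (rookGraph α β).Adj s t ↔ s ≠ t ∧ (s.1 = t.1 ∨ s.2 = t.2) := by
  simp only [boxProd_adj, top_adj, ne_eq, Prod.ext_iff]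
  tauto

theorem bijective_edge_completeBipartiteGraph :
    Function.Bijective (fun z ↦ ⟨s(Sum.inl z.1, Sum.inr z.2), by simp⟩ :
      α × β → (completeBipartiteGraph α β).edgeSet) := by
  constructor
  · rintro ⟨a, b⟩ ⟨a', b'⟩ h
    simpa using h
  · rintro ⟨⟨a | b, a' | b'⟩, h⟩
    · simp at h
    · exact ⟨(a, b'), rfl⟩
    · exact ⟨(a', b), Subtype.ext Sym2.eq_swap⟩
    · simp at h

variable (α β) in
/-- The isomorphism `K_α □ K_β ≃ L(K_{α,β})` sending the cell `(a, b)` to the edge joining `a` and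
`b`. -/
noncomputable def rookGraphIsoLineGraph :
    rookGraph α β ≃g (completeBipartiteGraph α β).lineGraph where
  toEquiv := .ofBijective _ bijective_edge_completeBipartiteGraph
  map_rel_iff' := by
    rintro ⟨a, b⟩ ⟨a', b'⟩
    rw [lineGraph_adj_iff_exists, rookGraph_adj, Equiv.ofBijective_apply, Equiv.ofBijective_apply]
    refine and_congr bijective_edge_completeBipartiteGraph.1.ne_iff ?_
    simp [or_and_right, exists_or]

variable {S P : Set (α × β)} {x : α} {y : β}

/-- The cells of row `x` outside `S` that share a column with a cell of `S`. -/
def rowCore (S : Set (α × β)) (x : α) : Set (α × β) :=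
  {z | z ∉ S ∧ z.1 = x ∧ ∃ s ∈ S, s.2 = z.2}

/-- The cells of column `y` outside `S` that share a row with a cell of `S`. -/
def columnCore (S : Set (α × β)) (y : β) : Set (α × β) :=
  {z | z ∉ S ∧ z.2 = y ∧ ∃ s ∈ S, s.1 = z.1}

theorem isSteinerCore_rowCore (hS : S.Nontrivial)
    (hx : ∀ s ∈ S, s.1 = x → ∀ t ∈ S, ¬(rookGraph α β).Adj s t) :
    IsSteinerCore (rookGraph α β) S (rowCore S x) := by
  have exists_adj (s : α × β) (hs : s ∈ S) : ∃ z ∈ rowCore S x, (rookGraph α β).Adj s z := by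
    simp only [rookGraph_adj] at hx ⊢
    by_cases hsx : s.1 = x
    · obtain ⟨t, ht, hts⟩ := hS.exists_ne s
      exact ⟨(x, t.2), ⟨by grind, rfl, t, ht, rfl⟩, by grind⟩
    · exact ⟨(x, s.2), ⟨by grind, rfl, s, hs, rfl⟩, by grind⟩
  obtain ⟨s, hs⟩ := hS.nonempty
  obtain ⟨z, hz, -⟩ := exists_adj s hs
  refine .of_isClique (fun z hz w hw hne ↦ ?_) ⟨z, hz⟩ ?_ exists_adj
  · exact rookGraph_adj.mpr ⟨hne, Or.inl (hz.2.1.trans hw.2.1.symm)⟩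
  · exact Set.disjoint_right.mpr fun z hz ↦ hz.1

theorem isSteinerCore_columnCore (hS : S.Nontrivial)
    (hy : ∀ s ∈ S, s.2 = y → ∀ t ∈ S, ¬(rookGraph α β).Adj s t) :
    IsSteinerCore (rookGraph α β) S (columnCore S y) := by
  have exists_adj (s : α × β) (hs : s ∈ S) : ∃ z ∈ columnCore S y, (rookGraph α β).Adj s z := by
    simp only [rookGraph_adj] at hy ⊢
    by_cases hsy : s.2 = y
    · obtain ⟨t, ht, hts⟩ := hS.exists_ne s
      exact ⟨(t.1, y), ⟨by grind, rfl, t, ht, rfl⟩, by grind⟩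
    · exact ⟨(s.1, y), ⟨by grind, rfl, s, hs, rfl⟩, by grind⟩
  obtain ⟨s, hs⟩ := hS.nonempty
  obtain ⟨z, hz, -⟩ := exists_adj s hs
  refine .of_isClique (fun z hz w hw hne ↦ ?_) ⟨z, hz⟩ ?_ exists_adj
  · exact rookGraph_adj.mpr ⟨hne, Or.inr (hz.2.1.trans hw.2.1.symm)⟩
  · exact Set.disjoint_right.mpr fun z hz ↦ hz.1

/-- The number of rows and columns met by `P`. -/
noncomputable def lineCount (P : Set (α × β)) : ℕ :=
  (Prod.fst '' P).ncard + (Prod.snd '' P).ncard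

/- At most one cell `m` of `S` lies outside `P`. The row core and the column core through such an
`m` do not meet, because their only common cell would be `m` itself. -/
theorem card_add_card_le_tauLocal_rookGraph_add_lineCount [Finite α] [Finite β]
    (hS : 2 < S.ncard) (hP : (S \ P).Subsingleton)
    (hisolated : ∀ s ∈ S \ P, ∀ t ∈ S, ¬(rookGraph α β).Adj s t) :
    Nat.card α + Nat.card β ≤ tauLocal (rookGraph α β) S + lineCount P := by
  have hnontrivial : S.Nontrivial := Set.one_lt_ncard_iff_nontrivial.mp (by omega)
  let cores : ↥(Prod.fst '' P)ᶜ ⊕ ↥(Prod.snd '' P)ᶜ → Set (α × β) :=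
    Sum.elim (fun x ↦ rowCore S x.1) fun y ↦ columnCore S y.1
  have hcores (i) : IsSteinerCore (rookGraph α β) S (cores i) := by
    rcases i with x | y
    · exact isSteinerCore_rowCore hnontrivial fun s hs hsx ↦
        hisolated s ⟨hs, fun hsP ↦ x.2 ⟨s, hsP, hsx⟩⟩
    · exact isSteinerCore_columnCore hnontrivial fun s hs hsy ↦
        hisolated s ⟨hs, fun hsP ↦ y.2 ⟨s, hsP, hsy⟩⟩
  have row_disjoint_column (x : ↥(Prod.fst '' P)ᶜ) (y : ↥(Prod.snd '' P)ᶜ) :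
      Disjoint (rowCore S x.1) (columnCore S y.1) := by
    rw [Set.disjoint_left]
    rintro z ⟨hzS, hzx, t, ht, htz⟩ ⟨-, hzy, s, hs, hsz⟩
    have hsP : s ∉ P := fun h ↦ x.2 ⟨s, h, hsz.trans hzx⟩
    have htP : t ∉ P := fun h ↦ y.2 ⟨t, h, htz.trans hzy⟩
    have hst : s = t := hP ⟨hs, hsP⟩ ⟨ht, htP⟩
    have hsz' : s = z := Prod.ext hsz (hst ▸ htz)
    exact hzS (hsz' ▸ hs)
  have hdisj : Pairwise (Function.onFun Disjoint cores) := by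
    rintro (x | y) (x' | y') hne
    · refine Set.disjoint_left.mpr fun z hz hz' ↦ hne ?_
      rw [Subtype.ext (hz.2.1.symm.trans hz'.2.1)]
    · exact row_disjoint_column x y'
    · exact (row_disjoint_column x' y).symm
    · refine Set.disjoint_left.mpr fun z hz hz' ↦ hne ?_
      rw [Subtype.ext (hz.2.1.symm.trans hz'.2.1)]
  have hle := card_le_tauLocal_of_isSteinerCore hS hcores hdisj
  rw [Nat.card_sum, Nat.card_coe_set_eq, Nat.card_coe_set_eq] at hle
  have hrows := (Prod.fst '' P).ncard_add_ncard_compl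
  have hcolumns := (Prod.snd '' P).ncard_add_ncard_compl
  rw [lineCount]
  omega

theorem lineCount_insert_le_of_adj {s t : α × β} (hs : s ∈ P)
    (hst : (rookGraph α β).Adj s t) : lineCount (insert t P) ≤ lineCount P + 1 := by
  have hrows := Set.ncard_insert_le t.1 (Prod.fst '' P)
  have hcolumns := Set.ncard_insert_le t.2 (Prod.snd '' P)
  simp only [lineCount, Set.image_insert_eq]
  rcases (rookGraph_adj.mp hst).2 with h | h
  · have ht : t.1 ∈ Prod.fst '' P := ⟨s, hs, h⟩
    rw [Set.insert_eq_of_mem ht]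
    omega
  · have ht : t.2 ∈ Prod.snd '' P := ⟨s, hs, h⟩
    rw [Set.insert_eq_of_mem ht]
    omega

theorem lineCount_le_two_mul_ncard (hP : P.Finite) : lineCount P ≤ 2 * P.ncard := by
  have hrows := Set.ncard_image_le (f := Prod.fst) hP
  have hcolumns := Set.ncard_image_le (f := Prod.snd) hP
  rw [lineCount]
  omega

theorem lineCount_triple_le_four {u v w : α × β} (huv : (rookGraph α β).Adj u v)
    (hw : (rookGraph α β).Adj w u ∨ (rookGraph α β).Adj w v) : lineCount {w, u, v} ≤ 4 := by
  have hsingle : lineCount {v} ≤ 2 := by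
    simpa using lineCount_le_two_mul_ncard (Set.finite_singleton v)
  have hpair : lineCount {u, v} ≤ lineCount {v} + 1 := lineCount_insert_le_of_adj rfl huv.symm
  have htriple : lineCount {w, u, v} ≤ lineCount {u, v} + 1 :=
    hw.elim (fun h ↦ lineCount_insert_le_of_adj (Or.inl rfl) h.symm)
      fun h ↦ lineCount_insert_le_of_adj (Or.inr rfl) h.symm
  omega

theorem lineCount_le_four (hS : S.ncard = 3)
    (hadj : ∀ s ∈ S, ∃ t ∈ S, (rookGraph α β).Adj s t) : lineCount S ≤ 4 := by
  obtain ⟨a, b, c, -, -, -, rfl⟩ := Set.ncard_eq_three.mp hS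
  simp only [Set.mem_insert_iff, Set.mem_singleton_iff, forall_eq_or_imp, forall_eq,
    exists_eq_or_imp, exists_eq_left, SimpleGraph.irrefl, false_or, or_false] at hadj
  obtain ⟨hab | hac, hb, hc⟩ := hadj
  · rw [Set.pair_comm, Set.insert_comm]
    exact lineCount_triple_le_four hab hc
  · rw [Set.insert_comm]
    exact lineCount_triple_le_four hac hb

theorem card_add_card_le_tauLocal_rookGraph_add_four [Finite α] [Finite β] (hS : S.ncard = 3) :
    Nat.card α + Nat.card β ≤ tauLocal (rookGraph α β) S + 4 := by
  by_cases hadj : ∀ s ∈ S, ∃ t ∈ S, (rookGraph α β).Adj s t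
  · have hle := card_add_card_le_tauLocal_rookGraph_add_lineCount (S := S) (P := S) (by omega)
      (by simp) (by simp)
    have := lineCount_le_four hS hadj
    omega
  · push Not at hadj
    obtain ⟨m, hm, hisolated⟩ := hadj
    have hdiff : S \ (S \ {m}) = {m} :=
      Set.sdiff_sdiff_cancel_left (Set.singleton_subset_iff.mpr hm)
    have hle := card_add_card_le_tauLocal_rookGraph_add_lineCount (S := S) (P := S \ {m})
      (by omega) (by simp [hdiff]) (by simpa [hdiff] using hisolated)
    have hcount : lineCount (S \ {m}) ≤ 4 := by
      have h2 := lineCount_le_two_mul_ncard (S \ {m}).toFinite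
      rw [Set.ncard_sdiff_singleton_of_mem hm] at h2
      omega
    omega

theorem tau_rookGraph_three_add_four [Fintype α] [Fintype β] [Nonempty α] [Nonempty β]
    (hcard : 4 ≤ Fintype.card α + Fintype.card β) :
    tau (rookGraph α β) 3 + 4 = Fintype.card α + Fintype.card β := by
  classical
  obtain ⟨v⟩ : Nonempty (α × β) := inferInstance
  have hdegree : (rookGraph α β).degree v + 2 = Fintype.card α + Fintype.card β := by
    have := Fintype.card_pos (α := α)
    have := Fintype.card_pos (α := β)
    rw [degree_boxProd, complete_graph_degree, complete_graph_degree]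
    omega
  have hlower (S : Finset (α × β)) (hS : S.card = 3) :
      (rookGraph α β).degree v + 1 ≤ tauLocal (rookGraph α β) S + 3 := by
    have hle := card_add_card_le_tauLocal_rookGraph_add_four ((Set.ncard_coe_finset S).trans hS)
    simp only [Nat.card_eq_fintype_card] at hle
    omega
  have htau := tau_add_eq_degree_add_one v (by norm_num) (by omega) hlower
  omega

end RookGraph

/-- For q ≥ 2p there is a graph G with τ_3(G) = p and τ_3(L(G)) = q;
in particular G = K_{p+2, q-p+2} works. -/
theorem exists_graph_tau_three (p q : ℕ) (h : 2 * p ≤ q) :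
    (∃ (V : Type) (_ : Fintype V) (G : SimpleGraph V),
        tau G 3 = p ∧ tau G.lineGraph 3 = q) ∧
    tau (completeBipartiteGraph (Fin (p + 2)) (Fin (q - p + 2))) 3 = p ∧
    tau (SimpleGraph.boxProd (⊤ : SimpleGraph (Fin (p + 2)))
        (⊤ : SimpleGraph (Fin (q - p + 2)))) 3 = q := by
  have hbipartite : tau (completeBipartiteGraph (Fin (p + 2)) (Fin (q - p + 2))) 3 = p := by
    have htau := tau_completeBipartiteGraph_add (α := Fin (p + 2)) (β := Fin (q - p + 2)) (k := 3)
    simp only [Fintype.card_fin] at htau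
    omega
  have hrook : tau (rookGraph (Fin (p + 2)) (Fin (q - p + 2))) 3 = q := by
    have htau := tau_rookGraph_three_add_four (α := Fin (p + 2)) (β := Fin (q - p + 2))
    simp only [Fintype.card_fin] at htau
    omega
  have hline := (tau_congr (rookGraphIsoLineGraph _ _) 3).symm.trans hrook
  exact ⟨⟨_, inferInstance, _, hbipartite, hline⟩, hbipartite, hrook⟩
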